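/- Assume n ≥ 2, 1 ≤ k < d, R1 > 0 and R2 > −R1, and set T*(m) = 1 + (R2/R1)·(m−1)/(n−1) for m = 1,…,n (so T*(m) > 0 for all m). Then T* minimizes the mean squared error of the Rand-k-Spatial estimator over the family: for every T : {1,…,n} → ℝ∖{0} for which Σ_{m=1}^n (p/T(m))·C(n−1,m−1)·p^{m−1}·(1−p)^{n−m} ≠ 0, the MSE of the Rand-k-Spatial estimator with scaling function T* is at most the MSE with scaling function T, i.e. E[||x̂^{T*} − x̄||²] ≤ E[||x̂^{T} − x̄||²]. -/

import Mathlib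

open Finset

noncomputable section

/-- A size-`k` subset of the coordinate set `{1,…,d}`. -/
abbrev KSub (d k : ℕ) := {S : Finset (Fin d) // S.card = k}

/-- Sample space: each of the `n` nodes independently picks a uniformly random
size-`k` subset of coordinates. -/
abbrev Omega (n d k : ℕ) := Fin n → KSub d k

/-- Expectation with respect to the uniform distribution on `Omega n d k`
(each `n`-tuple of `k`-subsets has probability `1 / C(d,k)^n`). -/
def Exp {n d k : ℕ} (f : Omega n d k → ℝ) : ℝ :=
  (∑ ω : Omega n d k, f ω) / (Fintype.card (Omega n d k) : ℝ)

/-- The sparsified vector of node `i`: `h_{ij} = x_{ij}` if `j ∈ S_i`, else `0`. -/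
def spars {n d k : ℕ} (x : Fin n → Fin d → ℝ) (ω : Omega n d k) (i : Fin n) (j : Fin d) : ℝ :=
  if j ∈ (ω i).1 then x i j else 0

/-- The per-coordinate sampling probability `p = k/d`. -/
def pr (d k : ℕ) : ℝ := (k : ℝ) / (d : ℝ)

/-- `M_j`: the number of nodes that send coordinate `j`. -/
def Mcount {n d k : ℕ} (ω : Omega n d k) (j : Fin d) : ℕ :=
  (Finset.univ.filter fun i : Fin n => j ∈ (ω i).1).card

/-- The normalizing constant
`β̄ = ( Σ_{m=1}^n (p/T(m))·C(n−1,m−1)·p^{m−1}·(1−p)^{n−m} )⁻¹`. -/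
def betaBar (n d k : ℕ) (T : ℕ → ℝ) : ℝ :=
  (∑ m ∈ Finset.Icc 1 n,
      (pr d k / T m) * ((n - 1).choose (m - 1) : ℝ) * pr d k ^ (m - 1)
        * (1 - pr d k) ^ (n - m))⁻¹

/-- The Rand-k-Spatial estimate of coordinate `j` of the mean:
`x̂_j = (1/n)·(β̄/T(M_j))·Σᵢ h_{ij}` when `M_j ≥ 1`, and `x̂_j = 0` when `M_j = 0`. -/
def spatialEst {n d k : ℕ} (x : Fin n → Fin d → ℝ) (T : ℕ → ℝ) (ω : Omega n d k)
    (j : Fin d) : ℝ :=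
  if 1 ≤ Mcount ω j then
    (1 / (n : ℝ)) * (betaBar n d k T / T (Mcount ω j)) * ∑ i : Fin n, spars x ω i j
  else 0

/-- The mean squared error `E[‖x̂ᵀ − x̄‖²]` of the Rand-k-Spatial estimator with
scaling function `T`. -/
def mseSpatial (n d k : ℕ) (x : Fin n → Fin d → ℝ) (T : ℕ → ℝ) : ℝ :=
  Exp (fun ω : Omega n d k =>
    ∑ j : Fin d, (spatialEst x T ω j - (1 / (n : ℝ)) * ∑ i : Fin n, x i j) ^ 2)

/-- Sums over the supersets of `s` of a function of the cardinality. -/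
lemma sum_superset_card {α : Type*} [Fintype α] [DecidableEq α] (s : Finset α) (g : ℕ → ℝ) :
    ∑ A : Finset α with s ⊆ A, g A.card =
      ∑ r ∈ range (Fintype.card α - s.card + 1),
        ((Fintype.card α - s.card).choose r : ℝ) * g (r + s.card) := by
  have h := Finset.sum_powerset_apply_card (fun r => g (r + s.card)) (x := sᶜ)
  rw [card_compl] at h
  simp only [nsmul_eq_mul] at h
  rw [← h]
  refine Finset.sum_nbij' (fun A => A \ s) (fun B => B ∪ s) ?_ ?_ ?_ ?_ ?_
  · intro A _
    rw [mem_powerset]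
    intro a ha
    simp_all
  · intro B _
    simp
  · intro A hA
    exact sdiff_union_of_subset (mem_filter.1 hA).2
  · intro B hB
    rw [mem_powerset] at hB
    refine union_sdiff_cancel_right ?_
    exact disjoint_left.2 fun a ha => mem_compl.1 (hB ha)
  · intro A hA
    rw [card_sdiff_add_card_eq_card (mem_filter.1 hA).2]

lemma sum_superset_singleton {n : ℕ} (i : Fin n) (g : ℕ → ℝ) :
    ∑ A : Finset (Fin n) with i ∈ A, g A.card =
      ∑ m ∈ Icc 1 n, ((n - 1).choose (m - 1) : ℝ) * g m := by
  have h := sum_superset_card {i} g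
  simp only [singleton_subset_iff, Fintype.card_fin, card_singleton] at h
  have hn : n - 1 + 1 = n := Nat.sub_add_cancel i.pos
  rw [h, ← Finset.Ico_add_one_right_eq_Icc, Finset.sum_Ico_eq_sum_range, Nat.add_sub_cancel, hn]
  refine Finset.sum_congr rfl fun r _ => ?_
  rw [Nat.add_sub_cancel_left, add_comm 1 r]

lemma sum_superset_pair {n : ℕ} {i l : Fin n} (hil : i ≠ l) (g : ℕ → ℝ) :
    ∑ A : Finset (Fin n) with i ∈ A ∧ l ∈ A, g A.card =
      ∑ m ∈ Icc 1 n,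
        ((n - 1).choose (m - 1) : ℝ) * (((m : ℝ) - 1) / ((n : ℝ) - 1) * g m) := by
  have h := sum_superset_card {i, l} g
  simp only [insert_subset_iff, singleton_subset_iff, Fintype.card_fin, card_pair hil] at h
  obtain ⟨N, rfl⟩ : ∃ N, n = N + 2 := ⟨n - 2, by have := Fin.val_ne_of_ne hil; omega⟩
  rw [h, ← Finset.Ico_add_one_right_eq_Icc, Finset.sum_Ico_eq_sum_range]
  simp only [Nat.add_sub_cancel, Nat.add_sub_cancel_left]
  rw [Finset.sum_range_succ' _ (N + 1)]
  simp only [add_zero, Nat.cast_one, sub_self, zero_div, zero_mul, mul_zero]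
  refine Finset.sum_congr rfl fun r _ => ?_
  have hc : ((N : ℝ) + 1) * (N.choose r : ℝ) = ((N + 1).choose (r + 1) : ℝ) * ((r : ℝ) + 1) := by
    exact_mod_cast Nat.add_one_mul_choose_eq N r
  have hN : (N : ℝ) + 1 ≠ 0 := by positivity
  rw [show N + 2 - 1 = N + 1 from rfl, show 1 + (r + 1) = r + 2 by ring]
  have e : ((N + 2 : ℕ) : ℝ) - 1 = N + 1 := by push_cast; ring
  have e' : ((r + 2 : ℕ) : ℝ) - 1 = r + 1 := by push_cast; ring
  rw [e, e', ← mul_assoc, mul_div_assoc', ← hc, mul_div_cancel_left₀ _ hN]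

lemma sum_card_mul_sum {n : ℕ} (g : ℕ → ℝ) (y : Fin n → ℝ) :
    ∑ A : Finset (Fin n), g A.card * ∑ i ∈ A, y i =
      (∑ m ∈ Icc 1 n, ((n - 1).choose (m - 1) : ℝ) * g m) * ∑ i, y i := by
  have h : ∀ i : Fin n, (∑ m ∈ Icc 1 n, ((n - 1).choose (m - 1) : ℝ) * g m) * y i =
      ∑ A : Finset (Fin n), if i ∈ A then g A.card * y i else 0 := by
    intro i
    rw [← sum_superset_singleton i g, Finset.sum_mul, Finset.sum_filter]
  rw [Finset.mul_sum, Finset.sum_congr rfl fun i _ => h i, Finset.sum_comm]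
  refine Finset.sum_congr rfl fun A _ => ?_
  rw [← Finset.sum_filter, Finset.mul_sum, Finset.filter_mem_eq_inter, Finset.univ_inter]

lemma sum_card_mul_sum_sq {n : ℕ} (g : ℕ → ℝ) (y : Fin n → ℝ) :
    ∑ A : Finset (Fin n), g A.card * (∑ i ∈ A, y i) ^ 2 =
      (∑ m ∈ Icc 1 n, ((n - 1).choose (m - 1) : ℝ) * g m) * (∑ i, y i ^ 2) +
      (∑ m ∈ Icc 1 n,
        ((n - 1).choose (m - 1) : ℝ) * (((m : ℝ) - 1) / ((n : ℝ) - 1) * g m)) *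
        ∑ i, ∑ l, if i ≠ l then y i * y l else 0 := by
  have hexp : ∀ A : Finset (Fin n), g A.card * (∑ i ∈ A, y i) ^ 2 =
      ∑ i, ∑ l, y i * y l * if i ∈ A ∧ l ∈ A then g A.card else 0 := by
    intro A
    have hA : ∑ i ∈ A, y i = ∑ i, if i ∈ A then y i else 0 := by simp
    rw [hA, sq, Finset.sum_mul_sum, Finset.mul_sum]
    refine Finset.sum_congr rfl fun i _ => ?_
    rw [Finset.mul_sum]
    refine Finset.sum_congr rfl fun l _ => ?_
    by_cases hi : i ∈ A <;> by_cases hl : l ∈ A <;> simp [hi, hl, mul_comm]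
  simp_rw [hexp]
  rw [Finset.sum_comm, Finset.mul_sum, Finset.mul_sum, ← Finset.sum_add_distrib]
  refine Finset.sum_congr rfl fun i _ => ?_
  rw [Finset.sum_comm]
  simp_rw [← Finset.mul_sum, ← Finset.sum_filter]
  rw [← Finset.add_sum_erase _ _ (mem_univ i), Finset.filter_ne, Finset.mul_sum (univ.erase i)]
  simp only [and_self]
  rw [sum_superset_singleton i g]
  congr 1
  · ring
  · refine Finset.sum_congr rfl fun l hl => ?_
    rw [sum_superset_pair (Finset.ne_of_mem_erase hl).symm g, mul_comm]

lemma two_mul_sum_lt {n : ℕ} (f : Fin n → Fin n → ℝ) (hf : ∀ i l, f i l = f l i) :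
    2 * ∑ i, ∑ l, (if i < l then f i l else 0) = ∑ i, ∑ l, if i ≠ l then f i l else 0 := by
  rw [two_mul]
  nth_rewrite 2 [Finset.sum_comm]
  rw [← Finset.sum_add_distrib]
  refine Finset.sum_congr rfl fun i _ => ?_
  rw [← Finset.sum_add_distrib]
  refine Finset.sum_congr rfl fun l _ => ?_
  rcases lt_trichotomy i l with h | h | h
  · simp [h, h.ne, h.not_gt]
  · simp [h]
  · simp [h, h.ne', h.not_gt, hf l i]

/-- The set of nodes that send coordinate `j`. -/
def senders {n d k : ℕ} (ω : Omega n d k) (j : Fin d) : Finset (Fin n) :=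
  univ.filter fun i => j ∈ (ω i).1

lemma card_KSub (d k : ℕ) : Fintype.card (KSub d k) = d.choose k := by
  rw [Fintype.card_finset_len, Fintype.card_fin]

lemma card_KSub_mem {d k : ℕ} (hk : 1 ≤ k) (j : Fin d) :
    (#{S : KSub d k | j ∈ S.1} : ℝ) = pr d k * (d.choose k : ℝ) := by
  have h1 : (#{S : KSub d k | j ∈ S.1} : ℝ) =
      ∑ A : Finset (Fin d) with j ∈ A, if A.card = k then (1 : ℝ) else 0 := by
    rw [← Finset.sum_filter, Finset.sum_const, nsmul_eq_mul, mul_one, Nat.cast_inj]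
    refine Finset.card_bij (fun S _ => S.1) ?_ ?_ ?_
    · intro S hS
      simpa [S.2] using hS
    · intro S _ S' _ h
      exact Subtype.ext h
    · intro A hA
      simp only [mem_filter, mem_univ, true_and] at hA
      exact ⟨⟨A, hA.2⟩, by simpa using hA.1, rfl⟩
  rw [h1, sum_superset_singleton j (fun m => if m = k then (1 : ℝ) else 0)]
  obtain ⟨D, rfl⟩ : ∃ D, d = D + 1 := ⟨d - 1, by have := j.pos; omega⟩
  obtain ⟨K, rfl⟩ : ∃ K, k = K + 1 := ⟨k - 1, by omega⟩
  have hc : ((D : ℝ) + 1) * (D.choose K : ℝ) = ((D + 1).choose (K + 1) : ℝ) * ((K : ℝ) + 1) := by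
    exact_mod_cast Nat.add_one_mul_choose_eq D K
  have hD : (D : ℝ) + 1 ≠ 0 := by positivity
  have hpr : (D.choose K : ℝ) = pr (D + 1) (K + 1) * ((D + 1).choose (K + 1) : ℝ) := by
    rw [pr]
    push_cast
    field_simp
    linarith
  rw [← hpr]
  by_cases hKD : K ≤ D
  · simp [hKD]
  · simp [hKD, Nat.choose_eq_zero_of_lt (not_le.1 hKD)]

lemma card_KSub_notMem {d k : ℕ} (hk : 1 ≤ k) (j : Fin d) :
    (#{S : KSub d k | j ∉ S.1} : ℝ) = (1 - pr d k) * (d.choose k : ℝ) := by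
  have h := Finset.card_filter_add_card_filter_not (s := (univ : Finset (KSub d k)))
    (fun S => j ∈ S.1)
  rw [card_univ, card_KSub] at h
  have h' : (#{S : KSub d k | j ∈ S.1} : ℝ) + (#{S : KSub d k | j ∉ S.1} : ℝ) = d.choose k := by
    exact_mod_cast h
  rw [card_KSub_mem hk] at h'
  linarith

/-- The nodes sending a given coordinate form a Bernoulli random subset of parameter `k / d`. -/
lemma Exp_senders {n d k : ℕ} (hk : 1 ≤ k) (hkd : k ≤ d) (j : Fin d)
    (F : Finset (Fin n) → ℝ) :
    Exp (fun ω : Omega n d k => F (senders ω j)) =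
      ∑ A : Finset (Fin n), pr d k ^ A.card * (1 - pr d k) ^ (n - A.card) * F A := by
  have hc : (d.choose k : ℝ) ≠ 0 := by exact_mod_cast (Nat.choose_pos hkd).ne'
  have hcard : (Fintype.card (Omega n d k) : ℝ) = (d.choose k : ℝ) ^ n := by
    rw [Fintype.card_fun, card_KSub, Fintype.card_fin, Nat.cast_pow]
  have hfib : ∀ A : Finset (Fin n),
      (#{ω : Omega n d k | senders ω j = A} : ℝ) =
        pr d k ^ A.card * (1 - pr d k) ^ (n - A.card) * (d.choose k : ℝ) ^ n := by
    intro A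
    have hpi : ({ω : Omega n d k | senders ω j = A} : Finset (Omega n d k)) =
        Fintype.piFinset fun i => if i ∈ A then ({S : KSub d k | j ∈ S.1} : Finset (KSub d k))
          else ({S : KSub d k | j ∉ S.1} : Finset (KSub d k)) := by
      ext ω
      simp only [mem_filter, mem_univ, true_and, Fintype.mem_piFinset, senders, Finset.ext_iff]
      refine forall_congr' fun i => ?_
      by_cases hi : i ∈ A <;> simp [hi]
    have hle : A.card ≤ n := by simpa using Finset.card_le_univ A
    rw [hpi, Fintype.card_piFinset, Nat.cast_prod]
    have : ∀ i : Fin n, ((#(if i ∈ A then ({S : KSub d k | j ∈ S.1} : Finset (KSub d k))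
          else ({S : KSub d k | j ∉ S.1} : Finset (KSub d k))) : ℕ) : ℝ) =
        (if i ∈ A then pr d k else 1 - pr d k) * (d.choose k : ℝ) := by
      intro i
      split_ifs
      · exact card_KSub_mem hk j
      · exact card_KSub_notMem hk j
    simp_rw [this]
    rw [Finset.prod_mul_distrib, Finset.prod_ite, Finset.prod_const, Finset.prod_const,
      Finset.prod_const, Finset.card_univ, Fintype.card_fin, Finset.filter_mem_eq_inter,
      Finset.univ_inter]
    have hco : #{i | i ∉ A} = n - A.card := by
      rw [← Finset.compl_filter, Finset.filter_mem_eq_inter, Finset.univ_inter, card_compl,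
        Fintype.card_fin]
    rw [hco]
  rw [Exp, hcard, div_eq_iff (pow_ne_zero _ hc), Finset.sum_mul,
    ← Finset.sum_fiberwise (s := univ) (g := fun ω : Omega n d k => senders ω j)]
  refine Finset.sum_congr rfl fun A _ => ?_
  rw [Finset.sum_congr rfl (g := fun _ => F A) fun ω hω => by rw [(mem_filter.1 hω).2],
    Finset.sum_const, nsmul_eq_mul, hfib]
  ring

lemma spatialEst_eq {n d k : ℕ} (x : Fin n → Fin d → ℝ) (T : ℕ → ℝ) (ω : Omega n d k)
    (j : Fin d) :
    spatialEst x T ω j = (1 / (n : ℝ)) * (betaBar n d k T / T (senders ω j).card) *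
      ∑ i ∈ senders ω j, x i j := by
  have hs : ∑ i : Fin n, spars x ω i j = ∑ i ∈ senders ω j, x i j := by
    rw [senders, Finset.sum_filter]
    rfl
  rw [spatialEst, hs]
  split_ifs with h
  · rfl
  · have h0 : senders ω j = ∅ := by
      rw [← Finset.card_eq_zero]
      exact Nat.lt_one_iff.1 (not_le.1 h)
    simp [h0]

/-- The probability that a fixed node sends a coordinate and exactly `m` nodes send it. -/
def sendWeight (n d k m : ℕ) : ℝ :=
  ((n - 1).choose (m - 1) : ℝ) * (pr d k ^ m * (1 - pr d k) ^ (n - m))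

lemma betaBar_sum_eq (n d k : ℕ) (T : ℕ → ℝ) :
    ∑ m ∈ Icc 1 n, (pr d k / T m) * ((n - 1).choose (m - 1) : ℝ) * pr d k ^ (m - 1)
        * (1 - pr d k) ^ (n - m) = ∑ m ∈ Icc 1 n, sendWeight n d k m * (T m)⁻¹ := by
  refine Finset.sum_congr rfl fun m hm => ?_
  obtain ⟨r, rfl⟩ : ∃ r, m = r + 1 := ⟨m - 1, by have := (mem_Icc.1 hm).1; omega⟩
  rw [sendWeight, Nat.add_sub_cancel, pow_succ]
  ring

lemma Exp_sum {n d k : ℕ} (f : Fin d → Omega n d k → ℝ) :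
    Exp (fun ω => ∑ j, f j ω) = ∑ j, Exp (f j) := by
  simp only [Exp]
  rw [Finset.sum_comm, Finset.sum_div]

lemma mse_coord {n d k : ℕ} (hk : 1 ≤ k) (hkd : k ≤ d) (x : Fin n → Fin d → ℝ) (T : ℕ → ℝ)
    (hS : ∑ m ∈ Icc 1 n, sendWeight n d k m * (T m)⁻¹ ≠ 0) (j : Fin d) :
    Exp (fun ω : Omega n d k =>
        (spatialEst x T ω j - (1 / (n : ℝ)) * ∑ i : Fin n, x i j) ^ 2) =
      (1 / (n : ℝ)) ^ 2 * (((∑ m ∈ Icc 1 n, sendWeight n d k m * (T m)⁻¹)⁻¹) ^ 2 *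
        ((∑ m ∈ Icc 1 n, sendWeight n d k m * (T m)⁻¹ ^ 2) * (∑ i, x i j ^ 2) +
        (∑ m ∈ Icc 1 n, sendWeight n d k m * (((m : ℝ) - 1) / ((n : ℝ) - 1) * (T m)⁻¹ ^ 2)) *
          ∑ i, ∑ l, if i ≠ l then x i j * x l j else 0) - (∑ i, x i j) ^ 2) := by
  simp_rw [spatialEst_eq]
  rw [Exp_senders hk hkd j (fun A => ((1 / (n : ℝ)) * (betaBar n d k T / T A.card) *
      ∑ i ∈ A, x i j - (1 / (n : ℝ)) * ∑ i : Fin n, x i j) ^ 2)]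
  set p := pr d k
  have hβ : betaBar n d k T = (∑ m ∈ Icc 1 n, sendWeight n d k m * (T m)⁻¹)⁻¹ := by
    rw [betaBar, betaBar_sum_eq]
  have h1 := sum_card_mul_sum (fun m => p ^ m * (1 - p) ^ (n - m) * (T m)⁻¹) (fun i => x i j)
  have h2 := sum_card_mul_sum_sq (fun m => p ^ m * (1 - p) ^ (n - m) * (T m)⁻¹ ^ 2)
    (fun i => x i j)
  have h0 : ∑ A : Finset (Fin n), p ^ A.card * (1 - p) ^ (n - A.card) = 1 := by
    have := Finset.sum_pow_mul_eq_add_pow p (1 - p) (univ : Finset (Fin n))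
    simpa using this
  have e1 : ∑ m ∈ Icc 1 n, ((n - 1).choose (m - 1) : ℝ) * (p ^ m * (1 - p) ^ (n - m) * (T m)⁻¹)
      = ∑ m ∈ Icc 1 n, sendWeight n d k m * (T m)⁻¹ :=
    Finset.sum_congr rfl fun m _ => by rw [sendWeight]; ring
  have e2 : ∑ m ∈ Icc 1 n,
        ((n - 1).choose (m - 1) : ℝ) * (p ^ m * (1 - p) ^ (n - m) * (T m)⁻¹ ^ 2)
      = ∑ m ∈ Icc 1 n, sendWeight n d k m * (T m)⁻¹ ^ 2 :=
    Finset.sum_congr rfl fun m _ => by rw [sendWeight]; ring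
  have e3 : ∑ m ∈ Icc 1 n, ((n - 1).choose (m - 1) : ℝ) *
        (((m : ℝ) - 1) / ((n : ℝ) - 1) * (p ^ m * (1 - p) ^ (n - m) * (T m)⁻¹ ^ 2))
      = ∑ m ∈ Icc 1 n, sendWeight n d k m * (((m : ℝ) - 1) / ((n : ℝ) - 1) * (T m)⁻¹ ^ 2) :=
    Finset.sum_congr rfl fun m _ => by rw [sendWeight]; ring
  rw [e1] at h1
  rw [e2, e3] at h2
  rw [← h2, hβ]
  set S := ∑ m ∈ Icc 1 n, sendWeight n d k m * (T m)⁻¹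
  set X := ∑ i, x i j
  have hexp : ∀ A : Finset (Fin n), p ^ A.card * (1 - p) ^ (n - A.card) *
      ((1 / (n : ℝ)) * (S⁻¹ / T A.card) * ∑ i ∈ A, x i j - (1 / (n : ℝ)) * X) ^ 2 =
      (1 / (n : ℝ)) ^ 2 * (S⁻¹ ^ 2 *
        (p ^ A.card * (1 - p) ^ (n - A.card) * (T A.card)⁻¹ ^ 2 * (∑ i ∈ A, x i j) ^ 2)
        - 2 * S⁻¹ * X * (p ^ A.card * (1 - p) ^ (n - A.card) * (T A.card)⁻¹ * ∑ i ∈ A, x i j)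
        + X ^ 2 * (p ^ A.card * (1 - p) ^ (n - A.card))) := by
    intro A
    ring
  simp_rw [hexp]
  rw [← Finset.mul_sum, Finset.sum_add_distrib, Finset.sum_sub_distrib, ← Finset.mul_sum,
    ← Finset.mul_sum, ← Finset.mul_sum, h1, h0]
  have hSS : S⁻¹ * S = 1 := inv_mul_cancel₀ hS
  linear_combination (1 / (n : ℝ)) ^ 2 * (-2 * X ^ 2) * hSS

lemma mseSpatial_eq {n d k : ℕ} (hk : 1 ≤ k) (hkd : k ≤ d) (x : Fin n → Fin d → ℝ)
    {R1 R2 : ℝ} (hR1 : R1 = ∑ i : Fin n, ∑ j : Fin d, x i j ^ 2)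
    (hR2 : R2 = 2 * ∑ i : Fin n, ∑ l : Fin n,
        if i < l then ∑ j : Fin d, x i j * x l j else 0) (T : ℕ → ℝ)
    (hS : ∑ m ∈ Icc 1 n, sendWeight n d k m * (T m)⁻¹ ≠ 0) :
    mseSpatial n d k x T =
      (1 / (n : ℝ)) ^ 2 * (((∑ m ∈ Icc 1 n, sendWeight n d k m * (T m)⁻¹)⁻¹) ^ 2 *
        (∑ m ∈ Icc 1 n, sendWeight n d k m *
          ((T m)⁻¹ ^ 2 * (R1 + R2 * (((m : ℝ) - 1) / ((n : ℝ) - 1)))))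
        - ∑ j, (∑ i, x i j) ^ 2) := by
  have hR2' : R2 = ∑ j, ∑ i, ∑ l, if i ≠ l then x i j * x l j else 0 := by
    rw [hR2, two_mul_sum_lt (fun i l => ∑ j, x i j * x l j)
      (fun i l => Finset.sum_congr rfl fun j _ => mul_comm _ _)]
    conv_rhs => rw [Finset.sum_comm]
    refine Finset.sum_congr rfl fun i _ => ?_
    conv_rhs => rw [Finset.sum_comm]
    refine Finset.sum_congr rfl fun l _ => ?_
    split_ifs <;> simp
  have hR1' : R1 = ∑ j, ∑ i, x i j ^ 2 := by rw [hR1, Finset.sum_comm]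
  rw [mseSpatial, Exp_sum (fun j (ω : Omega n d k) =>
    (spatialEst x T ω j - (1 / (n : ℝ)) * ∑ i : Fin n, x i j) ^ 2)]
  simp_rw [mse_coord hk hkd x T hS]
  rw [← Finset.mul_sum, Finset.sum_sub_distrib, ← Finset.mul_sum, Finset.sum_add_distrib,
    ← Finset.mul_sum, ← Finset.mul_sum, ← hR1', ← hR2', Finset.sum_mul, Finset.sum_mul,
    ← Finset.sum_add_distrib]
  congr 3
  exact Finset.sum_congr rfl fun m _ => by ring

/-- optimal scaling function: under `n ≥ 2`, `1 ≤ k < d`,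
`R₁ > 0` and `R₂ > −R₁`, the scaling function `T*(m) = 1 + (R₂/R₁)·(m−1)/(n−1)`
minimizes the MSE of the Rand-k-Spatial estimator over the whole family. -/
theorem spatial_optimal_T (n d k : ℕ) (hn : 2 ≤ n) (hk : 1 ≤ k) (hkd : k < d)
    (x : Fin n → Fin d → ℝ) (R1 R2 : ℝ)
    (hR1 : R1 = ∑ i : Fin n, ∑ j : Fin d, x i j ^ 2)
    (hR2 : R2 = 2 * ∑ i : Fin n, ∑ l : Fin n,
        if i < l then ∑ j : Fin d, x i j * x l j else 0)
    (hR1pos : 0 < R1) (hR2gt : -R1 < R2)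
    (Tstar : ℕ → ℝ)
    (hTstar : ∀ m : ℕ, Tstar m = 1 + (R2 / R1) * ((m : ℝ) - 1) / ((n : ℝ) - 1)) :
    ∀ T : ℕ → ℝ, (∀ m ∈ Finset.Icc 1 n, T m ≠ 0) →
      (∑ m ∈ Finset.Icc 1 n,
          (pr d k / T m) * ((n - 1).choose (m - 1) : ℝ) * pr d k ^ (m - 1)
            * (1 - pr d k) ^ (n - m)) ≠ 0 →
      mseSpatial n d k x Tstar ≤ mseSpatial n d k x T := by
  intro T _ hS
  have hn1 : (0 : ℝ) < (n : ℝ) - 1 := by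
    have : (2 : ℝ) ≤ n := by exact_mod_cast hn
    linarith
  have hd : (0 : ℝ) < d := by exact_mod_cast (by omega : 0 < d)
  have hp0 : 0 < pr d k := div_pos (by exact_mod_cast hk) hd
  have hp1 : 0 < 1 - pr d k := by
    rw [sub_pos, pr, div_lt_one hd]
    exact_mod_cast hkd
  have hw : ∀ m ∈ Icc 1 n, 0 < sendWeight n d k m := by
    intro m hm
    rw [mem_Icc] at hm
    have hch : (0 : ℝ) < ((n - 1).choose (m - 1) : ℝ) := by
      exact_mod_cast Nat.choose_pos (by omega)
    unfold sendWeight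
    positivity
  have hR : ∀ m : ℕ, R1 + R2 * (((m : ℝ) - 1) / ((n : ℝ) - 1)) = R1 * Tstar m := by
    intro m
    rw [hTstar]
    field_simp
  have hT : ∀ m ∈ Icc 1 n, 0 < Tstar m := by
    intro m hm
    rw [mem_Icc] at hm
    have h1 : (1 : ℝ) ≤ m := by exact_mod_cast hm.1
    have h2 : (m : ℝ) ≤ n := by exact_mod_cast hm.2
    have ht0 : 0 ≤ ((m : ℝ) - 1) / ((n : ℝ) - 1) := div_nonneg (by linarith) hn1.le
    have ht1 : ((m : ℝ) - 1) / ((n : ℝ) - 1) ≤ 1 := (div_le_one hn1).2 (by linarith)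
    refine pos_of_mul_pos_right (a := R1) ?_ hR1pos.le
    rw [← hR]
    generalize ((m : ℝ) - 1) / ((n : ℝ) - 1) = t at ht0 ht1
    rcases le_or_gt 0 R2 with h | h
    · positivity
    · nlinarith
  rw [betaBar_sum_eq] at hS
  have hSs : 0 < ∑ m ∈ Icc 1 n, sendWeight n d k m * (Tstar m)⁻¹ :=
    Finset.sum_pos (fun m hm => mul_pos (hw m hm) (inv_pos.2 (hT m hm)))
      ⟨1, mem_Icc.2 ⟨le_rfl, by omega⟩⟩
  rw [mseSpatial_eq hk hkd.le x hR1 hR2 T hS, mseSpatial_eq hk hkd.le x hR1 hR2 Tstar hSs.ne']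
  simp_rw [hR]
  refine mul_le_mul_of_nonneg_left (sub_le_sub_right ?_ _) (sq_nonneg _)
  have hQs : ∑ m ∈ Icc 1 n, sendWeight n d k m * ((Tstar m)⁻¹ ^ 2 * (R1 * Tstar m)) =
      R1 * ∑ m ∈ Icc 1 n, sendWeight n d k m * (Tstar m)⁻¹ := by
    rw [Finset.mul_sum]
    refine Finset.sum_congr rfl fun m hm => ?_
    have := (hT m hm).ne'
    field_simp
  have hQ : ∑ m ∈ Icc 1 n, sendWeight n d k m * ((T m)⁻¹ ^ 2 * (R1 * Tstar m)) =
      R1 * ∑ m ∈ Icc 1 n, sendWeight n d k m * ((T m)⁻¹ ^ 2 * Tstar m) := by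
    rw [Finset.mul_sum]
    exact Finset.sum_congr rfl fun m _ => by ring
  have hCS := Finset.sum_sq_le_sum_mul_sum_of_sq_le_mul (Icc 1 n)
    (r := fun m => sendWeight n d k m * (T m)⁻¹)
    (f := fun m => sendWeight n d k m * ((T m)⁻¹ ^ 2 * Tstar m))
    (g := fun m => sendWeight n d k m * (Tstar m)⁻¹)
    (fun m hm => mul_nonneg (hw m hm).le (mul_nonneg (sq_nonneg _) (hT m hm).le))
    (fun m hm => mul_nonneg (hw m hm).le (inv_pos.2 (hT m hm)).le)
    (fun m hm => by
      have := (hT m hm).ne'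
      refine le_of_eq ?_
      field_simp)
  rw [hQs, hQ]
  set S := ∑ m ∈ Icc 1 n, sendWeight n d k m * (T m)⁻¹
  set Ss := ∑ m ∈ Icc 1 n, sendWeight n d k m * (Tstar m)⁻¹
  set Q := ∑ m ∈ Icc 1 n, sendWeight n d k m * ((T m)⁻¹ ^ 2 * Tstar m)
  have hSsq : 0 < S ^ 2 := by positivity
  have hl : Ss⁻¹ ^ 2 * (R1 * Ss) = R1 * (1 / Ss) := by field_simp
  have hr : S⁻¹ ^ 2 * (R1 * Q) = R1 * (Q / S ^ 2) := by field_simp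
  rw [hl, hr]
  refine mul_le_mul_of_nonneg_left ?_ hR1pos.le
  rw [div_le_div_iff₀ hSs hSsq]
  linarith
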